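/- arXiv:2110.05682 — 4 statements merged into one kernel-verified Lean document; each statement's English description precedes it below -/
import Mathlib

section
/- For every integer t ≥ 1 one has 1/√t ≤ Σ_{i=1}^t α_t^i/√i ≤ 2/√t. -/
open Finset

/-- The learning rate `α_t = (H+1)/(H+t)`. -/
noncomputable def lr (H t : ℕ) : ℝ := (H + 1) / (H + t)

/-- The coefficients `α_t^0 = ∏_{j=1}^t (1 - α_j)` and
    `α_t^i = α_i ∏_{j=i+1}^t (1 - α_j)` for `1 ≤ i ≤ t`. -/
noncomputable def acoef (H t i : ℕ) : ℝ :=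
  if i = 0 then ∏ j ∈ Finset.Icc 1 t, (1 - lr H j)
  else lr H i * ∏ j ∈ Finset.Icc (i + 1) t, (1 - lr H j)

/-!
The weights `α_t^i`, `1 ≤ i ≤ t`, form a probability distribution, so averaging the antitone
sequence `1 / √i` against them gives at least its last value `1 / √t`. For the upper bound, the
averages satisfy `S (t + 1) = (1 - α_{t+1}) * S t + α_{t+1} / √(t + 1)`, and `2 / √t` is a
supersolution of this recursion because `2 * √t * √(t + 1) ≤ t + (t + 1)` by AM-GM.
-/

theorem lr_nonneg (H t : ℕ) : 0 ≤ lr H t := by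
  unfold lr
  positivity

theorem lr_one (H : ℕ) : lr H 1 = 1 := by
  rw [lr, Nat.cast_one]
  exact div_self (by positivity)

theorem one_sub_lr_succ (H t : ℕ) : 1 - lr H (t + 1) = t / (H + t + 1) := by
  unfold lr
  push_cast
  field_simp
  ring

theorem one_sub_lr_nonneg (H : ℕ) {t : ℕ} (ht : 1 ≤ t) : 0 ≤ 1 - lr H t := by
  obtain ⟨s, rfl⟩ := Nat.exists_eq_add_of_le' ht
  rw [one_sub_lr_succ]
  positivity

theorem acoef_nonneg (H t i : ℕ) : 0 ≤ acoef H t i := by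
  have prod_nonneg_of_one_le {m : ℕ} (hm : 1 ≤ m) : 0 ≤ ∏ j ∈ Icc m t, (1 - lr H j) :=
    prod_nonneg fun j hj ↦ one_sub_lr_nonneg H (hm.trans (mem_Icc.1 hj).1)
  unfold acoef
  split_ifs
  · exact prod_nonneg_of_one_le le_rfl
  · exact mul_nonneg (lr_nonneg H i) (prod_nonneg_of_one_le (Nat.le_add_left 1 i))

theorem acoef_self (H : ℕ) {t : ℕ} (ht : t ≠ 0) : acoef H t t = lr H t := by
  simp [acoef, ht]

theorem acoef_succ (H : ℕ) {t i : ℕ} (hit : i ≤ t) :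
    acoef H (t + 1) i = (1 - lr H (t + 1)) * acoef H t i := by
  unfold acoef
  split_ifs <;> rw [prod_Icc_succ_top (by lia)] <;> ring

theorem sum_acoef_mul_succ (H t : ℕ) (f : ℕ → ℝ) :
    ∑ i ∈ Icc 1 (t + 1), acoef H (t + 1) i * f i =
      (1 - lr H (t + 1)) * ∑ i ∈ Icc 1 t, acoef H t i * f i + lr H (t + 1) * f (t + 1) := by
  rw [sum_Icc_succ_top (by lia), acoef_self H t.succ_ne_zero, mul_sum]
  congr 1
  refine sum_congr rfl fun i hi ↦ ?_
  rw [acoef_succ H (mem_Icc.1 hi).2, mul_assoc]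

theorem sum_acoef_mul_one (H : ℕ) (f : ℕ → ℝ) :
    ∑ i ∈ Icc 1 1, acoef H 1 i * f i = f 1 := by
  rw [Icc_self, sum_singleton, acoef_self H one_ne_zero, lr_one, one_mul]

theorem sum_acoef (H : ℕ) {t : ℕ} (ht : 1 ≤ t) : ∑ i ∈ Icc 1 t, acoef H t i = 1 := by
  induction t, ht using Nat.le_induction with
  | base => simpa using sum_acoef_mul_one H 1
  | succ t _ ih => simpa [ih] using sum_acoef_mul_succ H t 1

theorem le_sum_acoef_mul_of_antitoneOn (H : ℕ) {t : ℕ} (ht : 1 ≤ t) {f : ℕ → ℝ}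
    (hf : AntitoneOn f (Set.Icc 1 t)) : f t ≤ ∑ i ∈ Icc 1 t, acoef H t i * f i :=
  calc
    f t = ∑ i ∈ Icc 1 t, acoef H t i * f t := by rw [← sum_mul, sum_acoef H ht, one_mul]
    _ ≤ ∑ i ∈ Icc 1 t, acoef H t i * f i := by
      refine sum_le_sum fun i hi ↦ mul_le_mul_of_nonneg_left ?_ (acoef_nonneg H t i)
      exact hf (mem_Icc.1 hi) ⟨ht, le_rfl⟩ (mem_Icc.1 hi).2

theorem sum_acoef_mul_le_of_supersolution (H : ℕ) {f u : ℕ → ℝ} (h_one : f 1 ≤ u 1)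
    (h_succ : ∀ t, 1 ≤ t → (1 - lr H (t + 1)) * u t + lr H (t + 1) * f (t + 1) ≤ u (t + 1))
    {t : ℕ} (ht : 1 ≤ t) : ∑ i ∈ Icc 1 t, acoef H t i * f i ≤ u t := by
  induction t, ht using Nat.le_induction with
  | base => rwa [sum_acoef_mul_one]
  | succ t ht ih =>
    rw [sum_acoef_mul_succ]
    have := mul_le_mul_of_nonneg_left ih (one_sub_lr_nonneg H (Nat.le_add_left 1 t))
    linarith [h_succ t ht]

theorem antitoneOn_inv_sqrt_natCast : AntitoneOn (fun i : ℕ ↦ (√i)⁻¹) (Set.Ici 1) :=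
  fun _ hi _ _ hij ↦
    inv_anti₀ (Real.sqrt_pos.2 (Nat.cast_pos.2 hi)) (Real.sqrt_le_sqrt (Nat.cast_le.2 hij))

theorem two_mul_sqrt_mul_sqrt_le_add {x y : ℝ} (hx : 0 ≤ x) (hy : 0 ≤ y) :
    2 * √x * √y ≤ x + y := by
  simpa only [Real.sq_sqrt hx, Real.sq_sqrt hy] using two_mul_le_add_sq √x √y

theorem two_div_sqrt_supersolution (H t : ℕ) :
    (1 - lr H (t + 1)) * (2 / √t) + lr H (t + 1) * (√(t + 1 : ℕ))⁻¹ ≤ 2 / √(t + 1 : ℕ) := by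
  have amgm : 2 * √t * √(t + 1 : ℕ) ≤ t + (t + 1 : ℕ) :=
    two_mul_sqrt_mul_sqrt_le_add t.cast_nonneg (t + 1).cast_nonneg
  calc
    _ = (2 * (t / √t) + (H + 1) / √(t + 1 : ℕ)) / (H + t + 1) := by
      rw [one_sub_lr_succ, lr]
      push_cast
      ring
    _ = (2 * √t * √(t + 1 : ℕ) + (H + 1)) / (√(t + 1 : ℕ) * (H + t + 1)) := by
      rw [Real.div_sqrt]
      field_simp
    _ ≤ 2 * (H + t + 1) / (√(t + 1 : ℕ) * (H + t + 1)) := by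
      push_cast at amgm ⊢
      gcongr
      linarith [(H.cast_nonneg : (0 : ℝ) ≤ H)]
    _ = 2 / √(t + 1 : ℕ) := mul_div_mul_right _ _ (by positivity)

theorem stmt1 (H : ℕ) (hH : 1 ≤ H) :
    ∀ t : ℕ, 1 ≤ t →
      1 / Real.sqrt t ≤ (∑ i ∈ Finset.Icc 1 t, acoef H t i / Real.sqrt i) ∧
      (∑ i ∈ Finset.Icc 1 t, acoef H t i / Real.sqrt i) ≤ 2 / Real.sqrt t := by
  intro t ht
  simp only [div_eq_mul_inv (acoef H t _), one_div]
  constructor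
  · exact le_sum_acoef_mul_of_antitoneOn H ht
      (antitoneOn_inv_sqrt_natCast.mono Set.Icc_subset_Ici_self)
  · exact sum_acoef_mul_le_of_supersolution H (f := fun i ↦ (√i)⁻¹) (u := fun i ↦ 2 / √i)
      (by norm_num) (fun s _ ↦ two_div_sqrt_supersolution H s) ht
end

section
/- For every integer i ≥ 1, the infinite series Σ_{t=i}^∞ α_t^i converges and its sum equals 1 + 1/H. -/
open Finset

/-!
For `i ≥ 1` the terms are `α_{i+n}^i = α_i ∏_{k<n} (i + k) / (H + i + 1 + k)`, so the series is a
multiple of `∑ (x)_n / (y)_n` with `x = i` and `y = H + i + 1`, where `(x)_n` is the rising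
factorial. Writing `u_n = (y - 1 + n) (x)_n / (y)_n`, one has
`u_n - u_{n+1} = (y - x - 1) (x)_n / (y)_n`, so the series telescopes and `u_n` has a limit.
That limit is zero, as otherwise the terms of a convergent series would be of order `1 / n`.
-/

open Filter Topology Asymptotics

theorem eq_zero_of_summable_of_tendsto_natCast_mul {f : ℕ → ℝ} {L : ℝ} (hf : Summable f)
    (hL : Tendsto (fun n : ℕ => n * f n) atTop (𝓝 L)) : L = 0 := by
  by_contra hL0
  have one_isBigO : (fun _ : ℕ => (1 : ℝ)) =O[atTop] fun n : ℕ => n * f n :=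
    (isBigO_const_const 1 hL0 _).trans ((isEquivalent_const_iff_tendsto hL0).mpr hL).isBigO_symm
  have inv_isBigO : (fun n : ℕ => (n : ℝ)⁻¹) =O[atTop] f := by
    refine ((isBigO_refl (fun n : ℕ => (n : ℝ)⁻¹) atTop).mul one_isBigO).congr' ?_ ?_
    · exact .of_forall fun n => mul_one _
    · filter_upwards [eventually_ne_atTop 0] with n hn
      exact inv_mul_cancel_left₀ (Nat.cast_ne_zero.mpr hn) (f n)
  exact Real.not_summable_natCast_inv (summable_of_isBigO_nat hf inv_isBigO)

/-- The quotient `(x)_n / (y)_n` of rising factorials, the general term of Gauss's series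
`₂F₁(1, x; y; 1)`; written as a product of quotients so that it matches `acoef` factor by factor. -/
noncomputable def risingFactorialRatio (x y : ℝ) (n : ℕ) : ℝ :=
  ∏ k ∈ range n, (x + k) / (y + k)

section RisingFactorialRatio

variable {x y : ℝ}

theorem risingFactorialRatio_nonneg (hx : 0 ≤ x) (hy : 0 ≤ y) (n : ℕ) :
    0 ≤ risingFactorialRatio x y n :=
  prod_nonneg fun _ _ => by positivity

theorem risingFactorialRatio_succ_mul (hy : 0 < y) (n : ℕ) :
    risingFactorialRatio x y (n + 1) * (y + n) = risingFactorialRatio x y n * (x + n) := by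
  have hyn : y + n ≠ 0 := by positivity
  rw [risingFactorialRatio, prod_range_succ, mul_assoc, div_mul_cancel₀ _ hyn,
    risingFactorialRatio]

theorem mul_sum_risingFactorialRatio (hy : 0 < y) (n : ℕ) :
    (y - x - 1) * ∑ k ∈ range n, risingFactorialRatio x y k =
      (y - 1) - (y - 1 + n) * risingFactorialRatio x y n := by
  induction n with
  | zero => simp [risingFactorialRatio]
  | succ n ih =>
    rw [sum_range_succ, mul_add, ih]
    push_cast
    linear_combination risingFactorialRatio_succ_mul (x := x) hy n

theorem summable_risingFactorialRatio (hx : 0 ≤ x) (hxy : x + 1 < y) :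
    Summable (risingFactorialRatio x y) := by
  have hy : 0 < y := by linarith
  refine summable_of_sum_range_le (c := (y - 1) / (y - x - 1))
    (risingFactorialRatio_nonneg hx hy.le) fun n => ?_
  rw [le_div_iff₀' (by linarith), mul_sum_risingFactorialRatio hy]
  have remainder_nonneg : 0 ≤ (y - 1 + n) * risingFactorialRatio x y n :=
    mul_nonneg (add_nonneg (by linarith) n.cast_nonneg) (risingFactorialRatio_nonneg hx hy.le n)
  linarith

theorem hasSum_risingFactorialRatio (hx : 0 ≤ x) (hxy : x + 1 < y) :
    HasSum (risingFactorialRatio x y) ((y - 1) / (y - x - 1)) := by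
  have hsummable := summable_risingFactorialRatio hx hxy
  set S := ∑' n, risingFactorialRatio x y n
  have tendsto_natCast_mul : Tendsto (fun n : ℕ => n * risingFactorialRatio x y n) atTop
      (𝓝 ((y - 1) - (y - x - 1) * S - (y - 1) * 0)) := by
    refine (((hsummable.hasSum.tendsto_sum_nat.const_mul (y - x - 1)).const_sub (y - 1)).sub
      (hsummable.tendsto_atTop_zero.const_mul (y - 1))).congr fun n => ?_
    rw [mul_sum_risingFactorialRatio (by linarith)]
    ring
  have limit_eq_zero := eq_zero_of_summable_of_tendsto_natCast_mul hsummable tendsto_natCast_mul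
  have tsum_eq : S = (y - 1) / (y - x - 1) := by
    rw [eq_div_iff (by linarith)]
    linarith
  exact tsum_eq ▸ hsummable.hasSum

end RisingFactorialRatio

theorem one_sub_lr (H : ℕ) {t : ℕ} (ht : 1 ≤ t) : 1 - lr H t = (t - 1) / (H + t) := by
  have hHt : (H : ℝ) + t ≠ 0 := by positivity
  rw [lr, one_sub_div hHt]
  ring

theorem acoef_add_eq_lr_mul_risingFactorialRatio (H n : ℕ) {i : ℕ} (hi : 1 ≤ i) :
    acoef H (i + n) i = lr H i * risingFactorialRatio i (H + i + 1) n := by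
  rw [acoef, if_neg (by lia), risingFactorialRatio, ← Ico_succ_right_eq_Icc,
    prod_Ico_eq_prod_range]
  congr 1
  refine prod_congr (by simp) fun k _ => ?_
  rw [one_sub_lr H (by lia)]
  push_cast
  ring

theorem stmt3 (H : ℕ) (hH : 1 ≤ H) :
    ∀ i : ℕ, 1 ≤ i →
      HasSum (fun n : ℕ => acoef H (i + n) i) (1 + 1 / (H : ℝ)) := by
  intro i hi
  have hH_pos : (0 : ℝ) < H := by exact_mod_cast hH
  have sum_eq : lr H i * ((H + i + 1 - 1) / (H + i + 1 - i - 1)) = 1 + 1 / (H : ℝ) := by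
    rw [lr, add_sub_cancel_right, add_right_comm, add_sub_cancel_right, add_sub_cancel_right]
    field_simp
  simp only [acoef_add_eq_lr_mul_risingFactorialRatio H _ hi, ← sum_eq]
  exact (hasSum_risingFactorialRatio i.cast_nonneg (by linarith)).mul_left (lr H i)
end

section
/- (Pythagorean theorem for Bregman divergence.) Let U ⊆ ℝⁿ be an open convex set, let F : ℝⁿ → ℝ be differentiable on U and convex on U, let X ⊆ U be a convex set, let y ∈ U, and suppose z ∈ X minimizes the function u ↦ D_F(u, y) over X. Then for every x ∈ X, D_F(x, y) − D_F(z, y) ≥ D_F(x, z). -/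
open RealInnerProductSpace

/-- The Bregman divergence `D_F(u,v) = F(u) - F(v) - ⟪u - v, ∇F(v)⟫` associated with a
function `F : ℝⁿ → ℝ`, where `∇F(v)` is the gradient of `F` at `v`. -/
noncomputable def bregman {n : ℕ} (F : EuclideanSpace ℝ (Fin n) → ℝ)
    (u v : EuclideanSpace ℝ (Fin n)) : ℝ :=
  F u - F v - ⟪u - v, gradient F v⟫

section BregmanWith

variable {E : Type*} [NormedAddCommGroup E] [NormedSpace ℝ E]

/-- The Bregman divergence of `F` from `v` to `u`, with a chosen functional `φ` in the role of the
derivative of `F` at `v`. It is the usual divergence when `φ` is that derivative; keeping `φ`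
as an argument also covers subgradients, and avoids the junk value of `fderiv` where `F` is not
differentiable. -/
def bregmanWith (F : E → ℝ) (φ : StrongDual ℝ E) (u v : E) : ℝ :=
  F u - F v - φ (u - v)

variable {F : E → ℝ} {φ F' : StrongDual ℝ E} {X : Set E} {x y z : E}

theorem bregmanWith_three_point (F : E → ℝ) (φ ψ : StrongDual ℝ E) (x y z : E) :
    bregmanWith F φ x y - bregmanWith F φ z y = bregmanWith F ψ x z + (ψ - φ) (x - z) := by
  simp only [bregmanWith, sub_apply, map_sub]
  ring

theorem hasFDerivWithinAt_bregmanWith (hF : HasFDerivWithinAt F F' X z)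
    (φ : StrongDual ℝ E) (y : E) :
    HasFDerivWithinAt (fun u ↦ bregmanWith F φ u y) (F' - φ) X z :=
  (hF.sub_const (F y)).sub (φ.hasFDerivWithinAt.comp z ((hasFDerivWithinAt_id z X).sub_const y)
    (Set.mapsTo_univ _ _))

theorem sub_apply_nonneg_of_isLocalMinOn_bregmanWith (hX : StarConvex ℝ z X)
    (hF : HasFDerivWithinAt F F' X z) (hmin : IsLocalMinOn (fun u ↦ bregmanWith F φ u y) X z)
    (hx : x ∈ X) : 0 ≤ (F' - φ) (x - z) :=
  hmin.hasFDerivWithinAt_nonneg (hasFDerivWithinAt_bregmanWith hF φ y)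
    (sub_mem_posTangentConeAt_of_segment_subset (hX.segment_subset hx))

theorem stmt7_general (hX : StarConvex ℝ z X) (hF : HasFDerivWithinAt F F' X z)
    (hmin : IsLocalMinOn (fun u ↦ bregmanWith F φ u y) X z) (hx : x ∈ X) :
    bregmanWith F F' x z ≤ bregmanWith F φ x y - bregmanWith F φ z y := by
  rw [bregmanWith_three_point F φ F']
  exact le_add_of_nonneg_right (sub_apply_nonneg_of_isLocalMinOn_bregmanWith hX hF hmin hx)

end BregmanWith

theorem bregman_eq_bregmanWith_fderiv {n : ℕ} (F : EuclideanSpace ℝ (Fin n) → ℝ)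
    (u v : EuclideanSpace ℝ (Fin n)) : bregman F u v = bregmanWith F (fderiv ℝ F v) u v := by
  rw [bregman, bregmanWith, inner_gradient_right, conj_trivial]

/-- Pythagorean theorem for the Bregman divergence. -/
theorem stmt7 {n : ℕ} (U : Set (EuclideanSpace ℝ (Fin n)))
    (hUopen : IsOpen U) (hUconv : Convex ℝ U)
    (F : EuclideanSpace ℝ (Fin n) → ℝ)
    (hFdiff : ∀ x ∈ U, DifferentiableAt ℝ F x) (hFconv : ConvexOn ℝ U F)
    (X : Set (EuclideanSpace ℝ (Fin n))) (hXU : X ⊆ U) (hXconv : Convex ℝ X)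
    (y : EuclideanSpace ℝ (Fin n)) (hy : y ∈ U)
    (z : EuclideanSpace ℝ (Fin n)) (hz : z ∈ X)
    (hzmin : ∀ u ∈ X, bregman F z y ≤ bregman F u y) :
    ∀ x ∈ X, bregman F x y - bregman F z y ≥ bregman F x z := by
  simp only [bregman_eq_bregmanWith_fderiv] at hzmin ⊢
  exact fun x hx ↦ stmt7_general (hXconv.starConvex hz)
    (hFdiff z (hXU hz)).hasFDerivAt.hasFDerivWithinAt (IsMinOn.localize hzmin) hx
end

section
/- Let θ̃ ∈ ℝ^A have strictly positive entries, let θ₁ ∈ Δ(A) have strictly positive entries, let θ' ∈ Δ(A) minimize the map u ↦ D_F(u, θ̃) over Δ(A), let β ∈ (0, 1], and set θ⁺ = β·θ' + (1 − β)·θ₁. Then for every θ ∈ Δ(A): D_F(θ, θ̃) ≥ (1/β)·D_F(θ, θ⁺) − ((1 − β)/β)·D_F(θ, θ₁) + D_F(θ', θ̃). -/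
open Finset Real

/-- The Bregman divergence of the unnormalized negentropy regularizer
`F(θ) = Σ_a (θ a * log (θ a) - θ a)`, namely
`D_F(u,v) = Σ_a u a * log (u a / v a) - Σ_a u a + Σ_a v a`
(extended to nonnegative `u` by the convention `0 * log 0 = 0`,
which holds automatically since `Real.log 0 = 0`). -/
noncomputable def DF {A : ℕ} (u v : Fin A → ℝ) : ℝ :=
  (∑ a, u a * Real.log (u a / v a)) - (∑ a, u a) + ∑ a, v a

/-- The probability simplex `Δ(A)`. -/
def simplex (A : ℕ) : Set (Fin A → ℝ) :=
  {θ | (∀ a, 0 ≤ θ a) ∧ (∑ a, θ a) = 1}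

/-!
The sum of `u` controls how `DF u` reacts to rescaling its second argument, so on the simplex
`DF · (c • p)` and `DF · p` differ by a constant. Hence the projection of `θt` onto the simplex is
its normalization `p`, and the Pythagorean inequality for Bregman projections is the identity
`DF θ θt = DF θ p + DF p θt`. It remains to bound `DF θ (β • p + (1 - β) • θ₁)` by convexity of
`DF θ` in its second argument.
-/

section Divergence

variable {A : ℕ} {u v p : Fin A → ℝ} {c : ℝ}

lemma DF_eq_sum (u v : Fin A → ℝ) :
    DF u v = ∑ a, (u a * log (u a / v a) - u a + v a) := by
  rw [DF, sum_add_distrib, sum_sub_distrib]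

lemma DF_eq_sum_klFun (hv : ∀ a, v a ≠ 0) :
    DF u v = ∑ a, v a * InformationTheory.klFun (u a / v a) := by
  rw [DF_eq_sum]
  refine sum_congr rfl fun a _ => ?_
  have hva := hv a
  rw [InformationTheory.klFun_apply]
  field_simp
  ring

lemma DF_self (u : Fin A → ℝ) : DF u u = 0 := by
  rw [DF_eq_sum]
  refine sum_eq_zero fun a _ => ?_
  rcases eq_or_ne (u a) 0 with hua | hua <;> simp [hua]

lemma eq_of_DF_nonpos (hu : ∀ a, 0 ≤ u a) (hv : ∀ a, 0 < v a) (huv : DF u v ≤ 0) : u = v := by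
  have ratio_nonneg (a) : 0 ≤ u a / v a := div_nonneg (hu a) (hv a).le
  have term_nonneg : ∀ a ∈ univ, 0 ≤ v a * InformationTheory.klFun (u a / v a) := fun a _ =>
    mul_nonneg (hv a).le (InformationTheory.klFun_nonneg (ratio_nonneg a))
  rw [DF_eq_sum_klFun fun a => (hv a).ne'] at huv
  have term_eq_zero :=
    (sum_eq_zero_iff_of_nonneg term_nonneg).1 (huv.antisymm (sum_nonneg term_nonneg))
  funext a
  have klFun_eq_zero := (mul_eq_zero.1 (term_eq_zero a (mem_univ a))).resolve_left (hv a).ne'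
  exact (div_eq_one_iff_eq (hv a).ne').1
    ((InformationTheory.klFun_eq_zero_iff (ratio_nonneg a)).1 klFun_eq_zero)

lemma DF_smul_right (u : Fin A → ℝ) (hp : ∀ a, p a ≠ 0) (hc : c ≠ 0) :
    DF u (c • p) = DF u p - (∑ a, u a) * log c + (c - 1) * ∑ a, p a := by
  simp only [DF_eq_sum, sum_mul, mul_sum, ← sum_sub_distrib, ← sum_add_distrib]
  refine sum_congr rfl fun a _ => ?_
  rcases eq_or_ne (u a) 0 with hua | hua
  · simp only [hua, Pi.smul_apply, smul_eq_mul]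
    ring
  · rw [Pi.smul_apply, smul_eq_mul, log_div hua (mul_ne_zero hc (hp a)), log_mul hc (hp a),
      log_div hua (hp a)]
    ring

lemma DF_smul_right_eq_add (hp : ∀ a, p a ≠ 0) (hc : c ≠ 0) (hup : ∑ a, u a = ∑ a, p a) :
    DF u (c • p) = DF u p + DF p (c • p) := by
  rw [DF_smul_right u hp hc, DF_smul_right p hp hc, DF_self, hup]
  ring

end Divergence

section Convexity

lemma convexOn_mul_log_div_sub_add {x : ℝ} (hx : 0 ≤ x) :
    ConvexOn ℝ (Set.Ioi 0) fun y => x * log (x / y) - x + y := by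
  have convex_neg_log : ConvexOn ℝ (Set.Ioi 0) fun y => x * -log y :=
    strictConcaveOn_log_Ioi.concaveOn.neg.smul hx
  refine ((convex_neg_log.add (convexOn_id (convex_Ioi 0))).add_const (x * log x - x)).congr ?_
  intro y hy
  rcases eq_or_ne x 0 with rfl | hx0
  · simp
  · simp only [Pi.add_apply, id, log_div hx0 (ne_of_gt hy)]
    ring

lemma convexOn_DF_right {A : ℕ} {u : Fin A → ℝ} (hu : ∀ a, 0 ≤ u a) :
    ConvexOn ℝ (Set.univ.pi fun _ => Set.Ioi 0) (DF u) := by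
  refine ⟨convex_pi fun _ _ => convex_Ioi 0, fun v hv w hw s t hs ht hst => ?_⟩
  simp only [DF_eq_sum, smul_sum, ← sum_add_distrib]
  exact sum_le_sum fun a _ => (convexOn_mul_log_div_sub_add (hu a)).2
    (hv a (Set.mem_univ a)) (hw a (Set.mem_univ a)) hs ht hst

end Convexity

section Projection

variable {A : ℕ} {v θ' : Fin A → ℝ}

lemma exists_eq_smul_mem_simplex [Nonempty (Fin A)] (hv : ∀ a, 0 < v a) :
    ∃ c : ℝ, ∃ p ∈ simplex A, 0 < c ∧ (∀ a, 0 < p a) ∧ v = c • p := by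
  have sum_pos_v : 0 < ∑ a, v a := sum_pos (fun a _ => hv a) univ_nonempty
  have pos (a) : 0 < ((∑ b, v b)⁻¹ • v) a := mul_pos (inv_pos.2 sum_pos_v) (hv a)
  refine ⟨∑ a, v a, (∑ a, v a)⁻¹ • v, ⟨fun a => (pos a).le, ?_⟩, sum_pos_v, pos, ?_⟩
  · simp only [Pi.smul_apply, smul_eq_mul, ← mul_sum, inv_mul_cancel₀ sum_pos_v.ne']
  · rw [smul_inv_smul₀ sum_pos_v.ne']

lemma nonempty_of_mem_simplex (hθ' : θ' ∈ simplex A) : Nonempty (Fin A) := by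
  by_contra hempty
  rw [not_nonempty_iff] at hempty
  simpa using hθ'.2

lemma exists_eq_smul_of_isMinOn_DF (hv : ∀ a, 0 < v a) (hθ' : θ' ∈ simplex A)
    (hmin : IsMinOn (DF · v) (simplex A) θ') : ∃ c : ℝ, 0 < c ∧ v = c • θ' := by
  have := nonempty_of_mem_simplex hθ'
  obtain ⟨c, p, hp, hc, hp_pos, rfl⟩ := exists_eq_smul_mem_simplex hv
  have pythagoras : DF θ' (c • p) = DF θ' p + DF p (c • p) :=
    DF_smul_right_eq_add (fun a => (hp_pos a).ne') hc.ne' (hθ'.2.trans hp.2.symm)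
  have le_at_p : DF θ' (c • p) ≤ DF p (c • p) := hmin hp
  have eq_p : θ' = p := eq_of_DF_nonpos hθ'.1 hp_pos (by linarith)
  exact ⟨c, hc, by rw [eq_p]⟩

end Projection

theorem stmt9_general {A : ℕ} {θt θ₁ θ' θ : Fin A → ℝ} {β : ℝ}
    (hθt : ∀ a, 0 < θt a) (hθ₁ : ∀ a, 0 < θ₁ a)
    (hθ' : θ' ∈ simplex A) (hmin : IsMinOn (DF · θt) (simplex A) θ')
    (hβ0 : 0 < β) (hβ1 : β ≤ 1) (hθ : θ ∈ simplex A) :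
    (1 / β) * DF θ (β • θ' + (1 - β) • θ₁) - ((1 - β) / β) * DF θ θ₁ + DF θ' θt ≤ DF θ θt := by
  obtain ⟨c, hc, rfl⟩ := exists_eq_smul_of_isMinOn_DF hθt hθ' hmin
  have hθ'pos (a) : 0 < θ' a := (pos_iff_pos_of_mul_pos (hθt a)).1 hc
  have pythagoras : DF θ (c • θ') = DF θ θ' + DF θ' (c • θ') :=
    DF_smul_right_eq_add (fun a => (hθ'pos a).ne') hc.ne' (hθ.2.trans hθ'.2.symm)
  have convexity : DF θ (β • θ' + (1 - β) • θ₁) ≤ β * DF θ θ' + (1 - β) * DF θ θ₁ :=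
    (convexOn_DF_right hθ.1).2 (fun a _ => hθ'pos a) (fun a _ => hθ₁ a)
      hβ0.le (sub_nonneg.2 hβ1) (add_sub_cancel β 1)
  calc (1 / β) * DF θ (β • θ' + (1 - β) • θ₁) - ((1 - β) / β) * DF θ θ₁ + DF θ' (c • θ')
      ≤ (1 / β) * (β * DF θ θ' + (1 - β) * DF θ θ₁) - ((1 - β) / β) * DF θ θ₁
          + DF θ' (c • θ') := by
        gcongr
    _ = DF θ θ' + DF θ' (c • θ') := by
        field_simp
        ring
    _ = DF θ (c • θ') := pythagoras.symm

theorem stmt9 (A : ℕ) (hA : 1 ≤ A) (θt θ₁ θ' : Fin A → ℝ) (β : ℝ)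
    (hθt : ∀ a, 0 < θt a) (hθ₁ : θ₁ ∈ simplex A) (hθ₁pos : ∀ a, 0 < θ₁ a)
    (hθ' : θ' ∈ simplex A) (hθ'min : ∀ u ∈ simplex A, DF θ' θt ≤ DF u θt)
    (hβ0 : 0 < β) (hβ1 : β ≤ 1)
    (θplus : Fin A → ℝ) (hθplus : θplus = β • θ' + (1 - β) • θ₁) :
    ∀ θ ∈ simplex A,
      DF θ θt ≥ (1 / β) * DF θ θplus - ((1 - β) / β) * DF θ θ₁ + DF θ' θt := by
  subst hθplus
  exact fun θ hθ => stmt9_general hθt hθ₁pos hθ' (isMinOn_iff.2 hθ'min) hβ0 hβ1 hθ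
end
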